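/- arXiv:2002.02188 — 2 statements merged into one kernel-verified Lean document; each statement's English description precedes it below -/
import Mathlib

section
/- Let N be a positive integer and t > -log N. Then η(t,N) - η_{n-1}(t,N) < 1/(24 n (t + log n)^2) for all n ≥ N, and η(t,N) - η_{n-1}(t,N) > 1/(24(n+1)(t+log(n+1))^2) - 1/(12(n+1)(t+log(n+1))^3); consequently η(t,N) = η_{n-1}(t,N) + (1+o(1))/(24 n (log n)^2) as n → ∞. -/
open Real Filter MeasureTheory Finset Topology

/-- The sequence `η_n(t,N) = Σ_{k=N}^n (1/(t+log(k+1/2)) - 1/(H_k - γ + t))`. -/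
noncomputable def eta (N : ℕ) (t : ℝ) (n : ℕ) : ℝ :=
  ∑ k ∈ Finset.Icc N n,
    (1 / (t + Real.log ((k : ℝ) + 1/2)) -
      1 / ((harmonic k : ℝ) - Real.eulerMascheroniConstant + t))

lemma aux_tel (d F : ℕ → ℝ) (S : ℕ → ℝ) (L : ℝ) (n : ℕ) (hS : ∀ m, n ≤ m → S (m+1) = S m + d m)
    (hd : ∀ m, n ≤ m → d m < F m - F (m+1)) (hL : Tendsto S atTop (𝓝 L))
    (hF : Tendsto F atTop (𝓝 0)) : L - S n < F n := by
  have anti : Antitone (fun j => S (n+1+j) + F (n+1+j)) := by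
    apply antitone_nat_of_succ_le
    intro j
    have h1 := hS (n+1+j) (by omega)
    have h2 := hd (n+1+j) (by omega)
    rw [show n+1+(j+1) = n+1+j+1 by ring]
    linarith
  have hlim : Tendsto (fun j => S (n+1+j) + F (n+1+j)) atTop (𝓝 L) := by
    have := (hL.add hF).comp (tendsto_add_atTop_nat (n+1))
    rw [add_zero] at this
    refine this.congr fun j => ?_
    simp only [Function.comp, add_comm j]
  have h := anti.le_of_tendsto hlim 0
  have h1 := hS n le_rfl
  have h2 := hd n le_rfl
  simp only [add_zero] at h
  linarith

noncomputable def ee (k : ℕ) : ℝ :=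
  (harmonic k : ℝ) - Real.eulerMascheroniConstant - Real.log ((k : ℝ) + 1/2)

lemma ee_tendsto : Tendsto ee atTop (𝓝 0) := by
  have h1 := Real.tendsto_harmonic_sub_log
  have h2 := (Real.tendsto_log_comp_add_sub_log (1/2)).comp (tendsto_natCast_atTop_atTop (R := ℝ))
  have h3 := (h1.sub h2).sub_const Real.eulerMascheroniConstant
  rw [sub_zero, sub_self] at h3
  refine h3.congr fun k => ?_
  simp only [ee, Function.comp]
  ring

lemma ee_diff (k : ℕ) : 1 / (12 * ((k:ℝ)+1)^3) ≤ ee k - ee (k+1) ∧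
    ee k - ee (k+1) ≤ 1 / (12 * ((k:ℝ)+1) * (((k:ℝ)+1)^2 - 1/4)) := by
  have hk : (0:ℝ) ≤ k := Nat.cast_nonneg k
  set a : ℝ := (k:ℝ) + 1/2 with ha
  have ha0 : 0 < a := by positivity
  have hs := Real.hasSum_log_one_add_inv ha0
  set x : ℝ := 1 / (2*a+1) with hx
  have hxv : x = 1 / (2*((k:ℝ)+1)) := by rw [hx, ha]; ring
  have hx0 : 0 < x := by positivity
  have hx1 : x < 1 := by rw [hxv, div_lt_one (by positivity)]; linarith
  have hee : ee k - ee (k+1) = Real.log (1 + a⁻¹) - 2 * x := by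
    have : Real.log (1 + a⁻¹) = Real.log ((k:ℝ)+1+1/2) - Real.log a := by
      rw [← Real.log_div (by positivity) (by positivity)]
      congr 1
      field_simp
      rw [ha]; ring
    rw [this, hxv, ha]
    simp only [ee, harmonic_succ]
    push_cast
    field_simp
    ring
  rw [hee]
  constructor
  · have := hs.summable.sum_le_tsum (Finset.range 2) (fun i _ => by positivity)
    rw [hs.tsum_eq] at this
    simp only [Finset.sum_range_succ, Finset.sum_range_zero] at this
    norm_num at this
    have e : 1 / (12 * ((k:ℝ)+1)^3) = 2/3 * x^3 := by
      rw [hxv]; field_simp; norm_num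
    rw [e]; linarith
  · have hx2 : x^2 < 1 := by nlinarith
    have g := ((hasSum_geometric_of_lt_one (by positivity) hx2).mul_left (2/3*x)).add
      (hasSum_ite_eq (0:ℕ) (4/3*x))
    have := hasSum_le (fun i => ?_) hs g
    · have e : 1 / (12 * ((k:ℝ)+1) * (((k:ℝ)+1)^2 - 1/4)) =
        2/3*x*(1-x^2)⁻¹ + 4/3*x - 2*x := by
        have h3 : (0:ℝ) < ((k:ℝ)+1)^2 - 1/4 := by nlinarith
        have h4 : 1 - x^2 = (((k:ℝ)+1)^2 - 1/4) / ((k:ℝ)+1)^2 := by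
          rw [hxv]; field_simp; ring
        rw [h4, hxv, inv_div]
        generalize hD : ((k:ℝ)+1)^2 - 1/4 = D at *
        have hD2 : ((k:ℝ)+1)^2 = D + 1/4 := by linarith
        rw [hD2]
        field_simp
        ring
      rw [e]; linarith
    · rcases Nat.eq_zero_or_pos i with h | h
      · subst h; simp; linarith
      · rw [if_neg (by omega)]
        have h1 : (1:ℝ) ≤ i := by exact_mod_cast h
        have h2 : 1 / (2*(i:ℝ)+1) ≤ 1/3 := by
          apply one_div_le_one_div_of_le <;> linarith
        have h3 : 0 ≤ x^(2*i+1) := by positivity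
        have h4 : x * (x^2)^i = x^(2*i+1) := by rw [pow_succ x (2*i), pow_mul]; ring
        calc _ = 2 * (1 / (2*(i:ℝ)+1)) * x^(2*i+1) := rfl
          _ ≤ 2 * (1/3) * x^(2*i+1) := by gcongr
          _ = _ := by rw [← h4]; ring

lemma inv_tendsto : Tendsto (fun k : ℕ => 1 / ((k:ℝ)+1)) atTop (𝓝 0) :=
  tendsto_one_div_add_atTop_nhds_zero_nat

lemma ee_upper (k : ℕ) (hk : 1 ≤ k) : ee k < 1 / (24 * (k:ℝ) * (k+1)) := by
  have := aux_tel (fun m => ee m - ee (m+1)) (fun m => 1 / (24 * (m:ℝ) * (m+1))) (fun m => - ee m)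
    0 k (fun m _ => by ring) ?_ (by simpa using ee_tendsto.neg) ?_
  · simpa using this
  · intro m hm
    refine (ee_diff m).2.trans_lt ?_
    have hm1 : (1:ℝ) ≤ m := by exact_mod_cast hk.trans hm
    push_cast
    have h3 : (0:ℝ) < ((m:ℝ)+1)^2 - 1/4 := by nlinarith
    have e : 1 / (24 * (m:ℝ) * (m+1)) - 1 / (24 * ((m:ℝ)+1) * (m+1+1)) =
      1 / (12 * ((m:ℝ)+1) * (((m:ℝ)+1)^2 - 1)) := by
      have : ((m:ℝ)+1)^2 - 1 = m * (m+2) := by ring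
      rw [this]; field_simp; ring
    rw [e]
    have h4 : (0:ℝ) < ((m:ℝ)+1)^2 - 1 := by nlinarith
    apply one_div_lt_one_div_of_lt (by positivity)
    gcongr
    norm_num
  · have h := inv_tendsto.mul ((tendsto_one_div_atTop_nhds_zero_nat (𝕜 := ℝ)).const_mul (1/24))
    simp only [mul_zero] at h
    refine h.congr fun m => ?_
    rw [mul_comm (24 * (m:ℝ)), ← one_div_mul_one_div, ← one_div_mul_one_div]

lemma ee_lower (k : ℕ) : 1 / (24 * ((k:ℝ)+1)^2) < ee k := by
  have := aux_tel (fun m => ee (m+1) - ee m) (fun m => - (1 / (24 * ((m:ℝ)+1)^2))) (fun m => ee m)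
    0 k (fun m _ => by ring) ?_ ee_tendsto ?_
  · linarith
  · intro m hm
    have h := (ee_diff m).1
    have hm1 : (0:ℝ) ≤ m := Nat.cast_nonneg m
    push_cast
    have e : 1 / (24 * ((m:ℝ)+1)^2) - 1 / (24 * ((m:ℝ)+1+1)^2) < 1 / (12 * ((m:ℝ)+1)^3) := by
      rw [div_sub_div _ _ (by positivity) (by positivity), div_lt_div_iff₀ (by positivity) (by positivity)]
      have : 0 < ((m:ℝ)+1)^2 * (3*m+5) := by positivity
      nlinarith
    linarith
  · have h := (inv_tendsto.pow 2).const_mul (-1/24)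
    simp only [ne_eq, OfNat.ofNat_ne_zero, not_false_eq_true, zero_pow, mul_zero] at h
    refine h.congr fun m => ?_
    field_simp

/-- upper termwise -/
lemma term_upper (k : ℕ) (hk : 1 ≤ k) (t : ℝ) (ht : 0 < t + Real.log k) :
    (1 / (t + Real.log ((k : ℝ) + 1/2)) -
      1 / ((harmonic k : ℝ) - Real.eulerMascheroniConstant + t)) <
    1 / (24 * (k:ℝ) * (t + Real.log k)^2) - 1 / (24 * ((k:ℝ)+1) * (t + Real.log ((k:ℝ)+1))^2) := by
  have hk0 : (0:ℝ) < k := by exact_mod_cast hk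
  have hu := ee_upper k hk
  have hl := (ee_lower k).trans' (show (0:ℝ) < 1 / (24 * ((k:ℝ)+1)^2) by positivity)
  set u := t + Real.log k with hu_def
  set v := t + Real.log ((k:ℝ)+1) with hv
  set a := t + Real.log ((k : ℝ) + 1/2) with ha
  have hb : (harmonic k : ℝ) - Real.eulerMascheroniConstant + t = a + ee k := by
    rw [ha, ee]; ring
  rw [hb]
  have hua : u < a := by
    have := Real.log_lt_log hk0 (show (k:ℝ) < k + 1/2 by linarith)
    linarith
  have hav : a < v := by
    have := Real.log_lt_log (show 0 < (k:ℝ)+1/2 by linarith) (show (k:ℝ) + 1/2 < k + 1 by linarith)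
    linarith
  have ha0 : 0 < a := ht.trans hua
  have hv0 : 0 < v := ha0.trans hav
  have hconc : u + v ≤ 2 * a := by
    have h1 : Real.log k + Real.log ((k:ℝ)+1) ≤ 2 * Real.log ((k:ℝ)+1/2) := by
      rw [← Real.log_mul (by positivity) (by positivity)]
      have : 2 * Real.log ((k:ℝ)+1/2) = Real.log (((k:ℝ)+1/2)^2) := by
        rw [Real.log_pow]; norm_num
      rw [this]
      apply Real.log_le_log (by positivity)
      nlinarith
    linarith
  have hC : 2 * (1/a^2) ≤ 1/u^2 + 1/v^2 := by
    have h1 : 1/a^2 ≤ 1/((u+v)/2)^2 := by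
      apply one_div_le_one_div_of_le (by positivity)
      gcongr; linarith
    have h2 : 2 * (1/((u+v)/2)^2) ≤ 1/u^2 + 1/v^2 := by
      rw [div_add_div _ _ (by positivity) (by positivity), ← mul_div_assoc,
        div_le_div_iff₀ (by positivity) (by positivity)]
      have : 0 < u * v := by positivity
      nlinarith [sq_nonneg (u-v), mul_nonneg this.le (sq_nonneg (u-v)), sq_nonneg (u^2-v^2), mul_nonneg (sq_nonneg (u-v)) (sq_nonneg (u+v))]
    linarith
  have hAB : 1/v^2 < 1/u^2 := by
    apply one_div_lt_one_div_of_lt (by positivity)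
    have : u < v := hua.trans hav
    gcongr
  have hd : 1/a - 1/(a+ee k) < 1 / (24 * (k:ℝ) * (k+1)) * (1/a^2) := by
    have h1 : 1/a - 1/(a+ee k) = ee k * (1 / (a * (a+ee k))) := by field_simp; ring
    rw [h1]
    have h2 : 1 / (a * (a+ee k)) ≤ 1/a^2 := by
      apply one_div_le_one_div_of_le (by positivity)
      nlinarith
    calc _ ≤ ee k * (1/a^2) := by gcongr
      _ < _ := by gcongr
  refine hd.trans ?_
  have hp : 1 / (k:ℝ) - 1 / ((k:ℝ)+1) = 1 / ((k:ℝ) * (k+1)) := by field_simp; ring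
  have e1 : 1 / (24 * (k:ℝ) * (k+1)) = 1/24 * (1 / (k:ℝ) - 1 / ((k:ℝ)+1)) := by
    rw [hp]; field_simp
  have e2 : 1 / (24 * (k:ℝ) * u^2) = 1/24 * ((1/(k:ℝ)) * (1/u^2)) := by field_simp
  have e3 : 1 / (24 * ((k:ℝ)+1) * v^2) = 1/24 * ((1/((k:ℝ)+1)) * (1/v^2)) := by field_simp
  rw [e1, e2, e3]
  have hp0 : 0 < 1 / (k:ℝ) - 1 / ((k:ℝ)+1) := by rw [hp]; positivity
  have hq0 : 0 < 1 / ((k:ℝ)+1) := by positivity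
  generalize 1/(k:ℝ) = p at *
  generalize 1/((k:ℝ)+1) = q at *
  generalize 1/u^2 = A at *
  generalize 1/v^2 = B at *
  generalize 1/a^2 = C at *
  nlinarith [mul_le_mul_of_nonneg_left hC hp0.le, mul_pos (show 0 < p + q by linarith) (sub_pos.2 hAB)]

lemma G_step (y t : ℝ) (hy : 0 < y) (ht : 0 < t + Real.log y) :
    (1 / (24 * y * (t + Real.log y)^2) - 1 / (12 * y * (t + Real.log y)^3)) -
    (1 / (24 * (y+1) * (t + Real.log (y+1))^2) - 1 / (12 * (y+1) * (t + Real.log (y+1))^3))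
     < 1 / (24 * y^2 * (t + Real.log y)^2) := by
  have key : ∀ x, y ≤ x → 0 < x ∧ t + Real.log y ≤ t + Real.log x := fun x hx =>
    ⟨hy.trans_le hx, by have := Real.log_le_log hy hx; linarith⟩
  have hder : ∀ x, y ≤ x → HasDerivAt
      (fun x => 1 / (24 * x * (t + Real.log x)^2) - 1 / (12 * x * (t + Real.log x)^3))
      (-(1 / (24 * x^2 * (t + Real.log x)^2)) + 1 / (4 * x^2 * (t + Real.log x)^4)) x := by
    intro x hx
    obtain ⟨hx0, hu⟩ := key x hx
    have hu0 := ht.trans_le hu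
    have hlog := (Real.hasDerivAt_log hx0.ne').const_add t
    have h2 := (((hasDerivAt_id x).const_mul 24).mul (hlog.pow 2)).fun_inv
      (by simp only [id, Pi.mul_apply, Pi.pow_apply]; positivity)
    have h3 := (((hasDerivAt_id x).const_mul 12).mul (hlog.pow 3)).fun_inv
      (by simp only [id, Pi.mul_apply, Pi.pow_apply]; positivity)
    have h := h2.sub h3
    refine (h.congr_deriv ?_).congr_of_eventuallyEq (Eventually.of_forall fun z => ?_)
    · simp only [id, Pi.mul_apply, Pi.pow_apply]
      generalize t + Real.log x = w at *
      field_simp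
      ring
    · simp [one_div]
  obtain ⟨c, hc, he⟩ := exists_hasDerivAt_eq_slope _ _ (show y < y + 1 by linarith)
    (fun x hx => (hder x hx.1).continuousAt.continuousWithinAt)
    (fun x hx => hder x hx.1.le)
  obtain ⟨hc0, hu⟩ := key c hc.1.le
  have hu0 := ht.trans_le hu
  rw [add_sub_cancel_left, div_one] at he
  have h4 : 0 < 1 / (4 * c^2 * (t + Real.log c)^4) := by positivity
  have h5 : 1 / (24 * c^2 * (t + Real.log c)^2) ≤ 1 / (24 * y^2 * (t + Real.log y)^2) := by
    apply one_div_le_one_div_of_le (by positivity)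
    have := hc.1.le
    gcongr
  linarith

lemma term_lower (k : ℕ) (hk : 1 ≤ k) (t : ℝ) (ht : 0 < t + Real.log k) :
    1 / (24 * ((k:ℝ)+1)^2 * (t + Real.log ((k:ℝ)+1))^2) <
    (1 / (t + Real.log ((k : ℝ) + 1/2)) -
      1 / ((harmonic k : ℝ) - Real.eulerMascheroniConstant + t)) := by
  have hk0 : (0:ℝ) < k := by exact_mod_cast hk
  have hk1 : (1:ℝ) ≤ k := by exact_mod_cast hk
  have hu := ee_upper k hk
  have hl := ee_lower k
  have hl0 := hl.trans' (show (0:ℝ) < 1 / (24 * ((k:ℝ)+1)^2) by positivity)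
  set v := t + Real.log ((k:ℝ)+1) with hv
  set a := t + Real.log ((k : ℝ) + 1/2) with ha
  have hb : (harmonic k : ℝ) - Real.eulerMascheroniConstant + t = a + ee k := by
    rw [ha, ee]; ring
  rw [hb]
  have ha0 : 0 < a := by
    have := Real.log_lt_log hk0 (show (k:ℝ) < k + 1/2 by linarith)
    linarith
  have hbv : a + ee k ≤ v := by
    have h1 := Real.one_sub_inv_le_log_of_pos (show 0 < ((k:ℝ)+1)/((k:ℝ)+1/2) by positivity)
    rw [Real.log_div (by positivity) (by positivity), inv_div] at h1
    have h2 : 1 - ((k:ℝ)+1/2)/((k:ℝ)+1) = 1 / (2*((k:ℝ)+1)) := by field_simp; ring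
    have h3 : 1 / (24 * (k:ℝ) * (k+1)) ≤ 1 / (2*((k:ℝ)+1)) := by
      apply one_div_le_one_div_of_le (by positivity)
      nlinarith
    linarith
  have h1 : 1/a - 1/(a+ee k) = ee k * (1 / (a * (a+ee k))) := by field_simp; ring
  have hv0 : 0 < v := by linarith
  have h2 : 1/v^2 ≤ 1 / (a * (a+ee k)) := by
    apply one_div_le_one_div_of_le (by positivity)
    rw [sq]
    gcongr
    linarith
  rw [h1]
  calc _ = 1 / (24 * ((k:ℝ)+1)^2) * (1/v^2) := by field_simp
    _ < ee k * (1/v^2) := by gcongr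
    _ ≤ _ := by gcongr

lemma tlog (t : ℝ) : Tendsto (fun n : ℕ => t + Real.log n) atTop atTop :=
  tendsto_atTop_add_const_left _ _ (Real.tendsto_log_atTop.comp tendsto_natCast_atTop_atTop)

lemma F_tendsto (t c : ℝ) (j : ℕ) (hj : j ≠ 0) :
    Tendsto (fun n : ℕ => 1 / (c * (n:ℝ) * (t + Real.log n)^j)) atTop (𝓝 0) := by
  have h1 := tendsto_inv_atTop_zero.comp (tlog t)
  have h := ((tendsto_one_div_atTop_nhds_zero_nat (𝕜 := ℝ)).const_mul (1/c)).mul (h1.pow j)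
  simp only [mul_zero, zero_mul] at h
  refine h.congr fun m => ?_
  simp [one_div]
  ring

lemma ratio_tendsto (t : ℝ) : Tendsto (fun n : ℕ => Real.log n / (t + Real.log n)) atTop (𝓝 1) := by
  have h := (tendsto_inv_atTop_zero.comp (tlog t)).const_mul t
  rw [mul_zero] at h
  have h2 := h.const_sub 1
  rw [sub_zero] at h2
  refine h2.congr' ?_
  filter_upwards [(tlog t).eventually_gt_atTop 0] with n hn
  simp only [Function.comp]
  field_simp
  ring

lemma ratio_tendsto' (t : ℝ) :
    Tendsto (fun n : ℕ => Real.log n / (t + Real.log ((n:ℝ)+1))) atTop (𝓝 1) := by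
  have h0 := (tlog t).comp (tendsto_add_atTop_nat 1)
  have h1 := (ratio_tendsto t).comp (tendsto_add_atTop_nat 1)
  have h2 := (Real.tendsto_log_comp_add_sub_log 1).comp (tendsto_natCast_atTop_atTop (R := ℝ))
  have h3 := h1.sub (h2.mul (tendsto_inv_atTop_zero.comp h0))
  simp only [mul_zero, sub_zero] at h3
  refine h3.congr fun n => ?_
  simp only [Function.comp]
  push_cast
  ring

theorem stmt_10 (N : ℕ) (hN : 0 < N) (t : ℝ) (ht : -Real.log N < t)
    (L : ℝ) (hL : Filter.Tendsto (eta N t) Filter.atTop (𝓝 L)) :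
    (∀ n : ℕ, N ≤ n →
      L - eta N t (n - 1) < 1 / (24 * n * (t + Real.log n)^2) ∧
      1 / (24 * ((n : ℝ) + 1) * (t + Real.log ((n : ℝ) + 1))^2) -
        1 / (12 * ((n : ℝ) + 1) * (t + Real.log ((n : ℝ) + 1))^3) <
        L - eta N t (n - 1)) ∧
    Filter.Tendsto
      (fun n : ℕ => (L - eta N t (n - 1)) * (24 * n * (Real.log n)^2))
      Filter.atTop (𝓝 1) := by
  have hN1 : 1 ≤ N := hN
  have hpos : ∀ k : ℕ, N ≤ k → 0 < t + Real.log k := by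
    intro k hk
    have h1 : (0:ℝ) < N := by exact_mod_cast hN
    have := Real.log_le_log h1 (show (N:ℝ) ≤ k by exact_mod_cast hk)
    linarith
  have hS : ∀ n, N ≤ n → ∀ m, n ≤ m → eta N t (m + 1 - 1) = eta N t (m - 1) +
      (1 / (t + Real.log ((m : ℝ) + 1/2)) -
      1 / ((harmonic m : ℝ) - Real.eulerMascheroniConstant + t)) := by
    intro n hn m hm
    obtain ⟨p, rfl⟩ : ∃ p, m = p + 1 := ⟨m - 1, by omega⟩
    simp only [Nat.add_sub_cancel]
    unfold eta
    rw [Finset.sum_Icc_succ_top (by omega)]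
  have hL' : Tendsto (fun m => eta N t (m - 1)) atTop (𝓝 L) :=
    hL.comp (tendsto_sub_atTop_nat 1)
  have main : ∀ n : ℕ, N ≤ n →
      L - eta N t (n - 1) < 1 / (24 * n * (t + Real.log n)^2) ∧
      1 / (24 * ((n : ℝ) + 1) * (t + Real.log ((n : ℝ) + 1))^2) -
        1 / (12 * ((n : ℝ) + 1) * (t + Real.log ((n : ℝ) + 1))^3) <
        L - eta N t (n - 1) := by
    intro n hn
    constructor
    · refine aux_tel _ (fun n : ℕ => 1 / (24 * (n:ℝ) * (t + Real.log n)^2))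
        (fun m => eta N t (m - 1)) L n (hS n hn) ?_ hL' (F_tendsto t 24 2 two_ne_zero)
      intro m hm
      have := term_upper m (by omega) t (hpos m (by omega))
      push_cast
      exact this
    · have h := aux_tel (fun m : ℕ => -(1 / (t + Real.log ((m : ℝ) + 1/2)) -
          1 / ((harmonic m : ℝ) - Real.eulerMascheroniConstant + t)))
        (fun n : ℕ => -(1 / (24 * ((n : ℝ) + 1) * (t + Real.log ((n : ℝ) + 1))^2) -
        1 / (12 * ((n : ℝ) + 1) * (t + Real.log ((n : ℝ) + 1))^3)))
        (fun m => - eta N t (m - 1)) (-L) n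
        (fun m hm => by rw [hS n hn m hm]; ring) ?_ hL'.neg ?_
      · linarith
      · intro m hm
        have h1 := term_lower m (by omega) t (hpos m (by omega))
        have h2 := G_step ((m:ℝ)+1) t (by positivity)
          (by have := hpos (m+1) (by omega); push_cast at this; exact this)
        push_cast
        linarith
      · have h := (((F_tendsto t 24 2 two_ne_zero).sub (F_tendsto t 12 3 three_ne_zero)).neg).comp
          (tendsto_add_atTop_nat 1)
        simp only [sub_zero, neg_zero] at h
        refine h.congr fun m => ?_
        simp only [Function.comp]
        push_cast
        rfl
  refine ⟨main, ?_⟩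
  have hup : Tendsto (fun n : ℕ => (Real.log n / (t + Real.log n))^2) atTop (𝓝 1) := by
    simpa using (ratio_tendsto t).pow 2
  have hlo : Tendsto (fun n : ℕ => (1 - 1 / ((n:ℝ)+1)) *
      (Real.log n / (t + Real.log ((n:ℝ)+1)))^2 * (1 - 2 * (t + Real.log ((n+1 : ℕ):ℝ))⁻¹))
      atTop (𝓝 1) := by
    have h0 := tendsto_inv_atTop_zero.comp ((tlog t).comp (tendsto_add_atTop_nat 1))
    have h := ((inv_tendsto.const_sub 1).mul ((ratio_tendsto' t).pow 2)).mul
      ((h0.const_mul 2).const_sub 1)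
    simp only [sub_zero, mul_zero, one_pow, mul_one] at h
    exact h
  refine tendsto_of_tendsto_of_tendsto_of_le_of_le' hlo hup ?_ ?_
  · filter_upwards [eventually_ge_atTop N] with n hn
    have hp := hpos (n+1) (by omega)
    push_cast at hp ⊢
    have hn0 : (0:ℝ) < n := by exact_mod_cast (by omega : 0 < n)
    refine le_trans (le_of_eq ?_) (mul_le_mul_of_nonneg_right (main n hn).2.le (by positivity))
    generalize t + Real.log ((n:ℝ)+1) = w at *
    field_simp
    ring
  · filter_upwards [eventually_ge_atTop N] with n hn
    have hp := hpos n hn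
    have hn0 : (0:ℝ) < n := by exact_mod_cast (by omega : 0 < n)
    refine le_trans (mul_le_mul_of_nonneg_right (main n hn).1.le (by positivity)) (le_of_eq ?_)
    generalize t + Real.log (n:ℝ) = w at *
    field_simp
end

section
/- Let N be a positive integer and t > -log N. Define θ_n(t,N) = ∫_N^n dx/(t+log x) - Σ_{k=N}^{n-1} 1/(H_k - γ + t). Then for every nonnegative integer j, the limit of (-1)^j (d^j/dt^j) θ_n(t,N) as n → ∞ exists, equals j! · lim_{n→∞}(∫_N^n dx/(t+log x)^{j+1} - Σ_{k=N}^{n-1} 1/(H_k-γ+t)^{j+1}), and is strictly positive; in particular θ(t,N) = lim_n θ_n(t,N) is a strictly totally monotone function of t on (-log N, ∞). -/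
open Real Filter MeasureTheory Finset Topology

/-- `θ_n(·,N)` as a function of `t`:
`θ_n(t,N) = ∫_N^n dx/(t+log x) - Σ_{k=N}^{n-1} 1/(H_k - γ + t)`. -/
noncomputable def thetaFun (N n : ℕ) (s : ℝ) : ℝ :=
  (∫ x in (N : ℝ)..(n : ℝ), 1 / (s + Real.log x)) -
    ∑ k ∈ Finset.Ico N n, 1 / ((harmonic k : ℝ) - Real.eulerMascheroniConstant + s)

/-- The limit function `θ(·,N) = lim_{n→∞} θ_n(·,N)`. -/
noncomputable def thetaLim (N : ℕ) (s : ℝ) : ℝ :=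
  limUnder Filter.atTop (fun n : ℕ => thetaFun N n s)

/-- The `j`-th power version of `thetaFun`. -/
noncomputable def thJ (N n j : ℕ) (s : ℝ) : ℝ :=
  (∫ x in (N : ℝ)..(n : ℝ), 1 / (s + Real.log x)^(j + 1)) -
    ∑ k ∈ Finset.Ico N n,
      1 / ((harmonic k : ℝ) - Real.eulerMascheroniConstant + s)^(j + 1)

lemma harm_step (k : ℕ) :
    (harmonic (k+1) : ℝ) - log ((k+1 : ℕ) + 1/2) < (harmonic k : ℝ) - log ((k:ℝ) + 1/2) := by
  have hk : (0:ℝ) < (k:ℝ) + 1/2 := by positivity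
  have h := lt_log_one_add_of_pos (x := 1 / ((k:ℝ) + 1/2)) (by positivity)
  have e1 : 2 * (1 / ((k:ℝ) + 1/2)) / (1 / ((k:ℝ) + 1/2) + 2) = ((k:ℝ)+1)⁻¹ := by
    field_simp
    ring
  have e2 : 1 + 1 / ((k:ℝ) + 1/2) = (((k+1 : ℕ) : ℝ) + 1/2) / ((k:ℝ) + 1/2) := by
    push_cast
    field_simp
    ring
  rw [e1, e2, log_div (by positivity) hk.ne'] at h
  rw [harmonic_succ]
  push_cast at h ⊢
  linarith

lemma log_half_lt (k : ℕ) :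
    log ((k:ℝ) + 1/2) < (harmonic k : ℝ) - Real.eulerMascheroniConstant := by
  have hanti : StrictAnti (fun k : ℕ => (harmonic k : ℝ) - log ((k:ℝ) + 1/2)) :=
    strictAnti_nat_of_succ_lt harm_step
  have hlim : Tendsto (fun k : ℕ => (harmonic k : ℝ) - log ((k:ℝ) + 1/2)) atTop
      (𝓝 Real.eulerMascheroniConstant) := by
    have h1 := tendsto_harmonic_sub_log
    have h2 := tendsto_harmonic_sub_log_add_one
    refine tendsto_of_tendsto_of_tendsto_of_le_of_le' h2 h1 ?_ ?_
    · filter_upwards with k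
      have : log ((k:ℝ) + 1/2) ≤ log ((k:ℝ)+1) := log_le_log (by positivity) (by linarith)
      linarith
    · filter_upwards [eventually_gt_atTop 0] with k hk
      have hk' : (0:ℝ) < k := by exact_mod_cast hk
      have : log (k:ℝ) ≤ log ((k:ℝ)+1/2) := log_le_log hk' (by linarith)
      linarith
  have h1 := hanti.antitone.le_of_tendsto hlim (k+1)
  have h2 := hanti (Nat.lt_succ_self k)
  simp only at h1 h2
  simp only [Nat.succ_eq_add_one] at h2
  linarith

lemma harm_lt_log (k : ℕ) :
    (harmonic k : ℝ) - Real.eulerMascheroniConstant < log ((k:ℝ) + 1) := by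
  have := eulerMascheroniSeq_lt_eulerMascheroniConstant k
  rw [eulerMascheroniSeq] at this
  linarith

lemma cont_f {a b s : ℝ} (ha : 0 < a) (hab : a ≤ b) (hs : 0 < s + log a) (p : ℕ) :
    ContinuousOn (fun x => 1 / (s + log x)^p) (Set.uIcc a b) := by
  rw [Set.uIcc_of_le hab]
  have hpos : ∀ x ∈ Set.Icc a b, 0 < s + log x := fun x hx => by
    have := log_le_log ha hx.1
    linarith
  refine ContinuousOn.div continuousOn_const ?_ (fun x hx => (pow_pos (hpos x hx) p).ne')
  refine ContinuousOn.pow (continuousOn_const.add ?_) p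
  exact continuousOn_log.mono (fun x hx => (lt_of_lt_of_le ha hx.1).ne')

lemma tangent {y c : ℝ} (hy : 0 < y) (hc : 0 < c) (p : ℕ) :
    1 / c^p * (1 - p * (y / c - 1)) ≤ 1 / y^p := by
  have hz : 0 < c / y := by positivity
  have h1 := one_add_mul_le_pow (a := c / y - 1) (by linarith) p
  have h2 : 1 - (p:ℝ) * (y / c - 1) ≤ 1 + p * (c / y - 1) := by
    have : 0 ≤ c / y + y / c - 2 := by
      have : c / y + y / c - 2 = (c - y)^2 / (c * y) := by field_simp; ring
      rw [this]; positivity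
    nlinarith [Nat.cast_nonneg (α := ℝ) p]
  have h3 : 1 - (p:ℝ) * (y / c - 1) ≤ (c / y)^p := by
    refine h2.trans (h1.trans (le_of_eq ?_)); congr 1; ring
  calc 1 / c^p * (1 - p * (y / c - 1)) ≤ 1 / c^p * (c / y)^p := by gcongr
    _ = 1 / y^p := by rw [div_pow]; field_simp

lemma midpoint_le {k : ℕ} (hk : 0 < k) {s : ℝ} (hs : 0 < s + log k) (p : ℕ) :
    1 / (s + log ((k:ℝ) + 1/2))^p ≤ ∫ x in (k:ℝ)..((k+1 : ℕ) : ℝ), 1 / (s + log x)^p := by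
  have hk' : (0:ℝ) < k := by exact_mod_cast hk
  set m : ℝ := (k:ℝ) + 1/2 with hm
  have hm0 : 0 < m := by positivity
  set c : ℝ := s + log m with hc
  have hc0 : 0 < c := by
    have : log (k:ℝ) ≤ log m := log_le_log hk' (by linarith)
    linarith
  have hint : ∫ x in (k:ℝ)..((k+1 : ℕ) : ℝ), 1 / c^p * (1 - p * ((x - m) / (m * c)))
      = 1 / c^p := by
    have : ∀ x : ℝ, 1 / c^p * (1 - p * ((x - m) / (m * c)))
        = (1 / c^p + 1 / c^p * p / c) - (1 / c^p * p / (m * c)) * x := by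
      intro x; field_simp; ring
    simp_rw [this]
    rw [intervalIntegral.integral_sub intervalIntegrable_const
      (Continuous.intervalIntegrable (by fun_prop) _ _),
      intervalIntegral.integral_const_mul, integral_id, intervalIntegral.integral_const]
    push_cast
    rw [smul_eq_mul, hm]
    field_simp
    ring
  rw [← hint]
  refine intervalIntegral.integral_mono_on (by push_cast; linarith) ?_ ?_ ?_
  · apply Continuous.intervalIntegrable; fun_prop
  · exact (cont_f hk' (by push_cast; linarith) hs p).intervalIntegrable
  · intro x hx
    have hx0 : 0 < x := lt_of_lt_of_le hk' hx.1
    have hy : 0 < s + log x := by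
      have := log_le_log hk' hx.1
      linarith
    refine le_trans ?_ (tangent hy hc0 p)
    have h1 : log x ≤ log m + (x - m) / m := by
      have := log_le_sub_one_of_pos (x := x / m) (by positivity)
      rw [log_div hx0.ne' hm0.ne'] at this
      have e : (x - m) / m = x / m - 1 := by field_simp
      linarith
    have h2 : (s + log x) / c - 1 ≤ (x - m) / (m * c) := by
      have : (x - m) / (m * c) = (c + (x-m)/m) / c - 1 := by field_simp; ring
      rw [this]
      have h3 : s + log x ≤ c + (x - m) / m := by linarith
      have h4 := div_le_div_of_nonneg_right h3 hc0.le
      linarith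
    gcongr

lemma int_le {k : ℕ} (hk : 0 < k) {s : ℝ} (hs : 0 < s + log k) (p : ℕ) :
    ∫ x in (k:ℝ)..((k+1 : ℕ) : ℝ), 1 / (s + log x)^p ≤ 1 / (s + log k)^p := by
  have hk' : (0:ℝ) < k := by exact_mod_cast hk
  have : ∫ x in (k:ℝ)..((k+1 : ℕ) : ℝ), 1 / (s + log k)^p = 1 / (s + log k)^p := by
    rw [intervalIntegral.integral_const]; push_cast; rw [smul_eq_mul]; ring
  rw [← this]
  refine intervalIntegral.integral_mono_on (by push_cast; linarith) ?_ (by simp) ?_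
  · exact (cont_f hk' (by push_cast; linarith) hs p).intervalIntegrable
  · intro x hx
    have := log_le_log hk' hx.1
    gcongr

lemma pos_of {N : ℕ} (hN : 0 < N) {s : ℝ} (hs : -log N < s) {x : ℝ} (h : (N:ℝ) ≤ x) :
    0 < s + log x := by
  have hN' : (0:ℝ) < N := by exact_mod_cast hN
  have := log_le_log hN' h
  linarith

lemma thJ_succ {N n : ℕ} (hN : 0 < N) (hn : N ≤ n) {s : ℝ} (hs : -log N < s) (j : ℕ) :
    thJ N (n+1) j s = thJ N n j s + ((∫ x in (n:ℝ)..((n+1 : ℕ) : ℝ), 1 / (s + log x)^(j+1))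
      - 1 / ((harmonic n : ℝ) - Real.eulerMascheroniConstant + s)^(j + 1)) := by
  have hN' : (0:ℝ) < N := by exact_mod_cast hN
  have hn' : (N:ℝ) ≤ n := by exact_mod_cast hn
  rw [thJ, thJ, Finset.sum_Ico_succ_top hn,
    ← intervalIntegral.integral_add_adjacent_intervals (a := (N:ℝ)) (b := n) (c := ((n+1 : ℕ):ℝ))]
  · ring
  · exact (cont_f hN' hn' (pos_of hN hs le_rfl) _).intervalIntegrable
  · exact (cont_f (hN'.trans_le hn') (by push_cast; linarith) (pos_of hN hs hn') _).intervalIntegrable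

lemma thJ_lt_succ {N n : ℕ} (hN : 0 < N) (hn : N ≤ n) {s : ℝ} (hs : -log N < s) (j : ℕ) :
    thJ N n j s < thJ N (n+1) j s := by
  have hn' : (N:ℝ) ≤ n := by exact_mod_cast hn
  rw [thJ_succ hN hn hs]
  have h1 := midpoint_le (hN.trans_le hn) (pos_of hN hs hn') (j+1)
  have h2 := log_half_lt n
  have h3 : 0 < s + log ((n:ℝ) + 1/2) := pos_of hN hs (by linarith)
  have h4 : 1 / ((harmonic n : ℝ) - Real.eulerMascheroniConstant + s)^(j + 1)
      < 1 / (s + log ((n:ℝ) + 1/2))^(j+1) := by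
    apply one_div_lt_one_div_of_lt (by positivity)
    exact pow_lt_pow_left₀ (by linarith) h3.le (by omega)
  linarith

lemma thJ_succ_le {N n : ℕ} (hN : 0 < N) (hn : N ≤ n) {s : ℝ} (hs : -log N < s) (j : ℕ) :
    thJ N (n+1) j s + 1 / (s + log ((n+1 : ℕ):ℝ))^(j+1)
      ≤ thJ N n j s + 1 / (s + log (n:ℝ))^(j+1) := by
  have hn' : (N:ℝ) ≤ n := by exact_mod_cast hn
  rw [thJ_succ hN hn hs]
  have h1 := int_le (hN.trans_le hn) (pos_of hN hs hn') (j+1)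
  have h2 := harm_lt_log n
  have h2' := log_half_lt n
  have h3 : 0 < s + log ((n:ℝ) + 1/2) := pos_of hN hs (by linarith)
  have h4 : 1 / (s + log ((n+1 : ℕ):ℝ))^(j+1) ≤
      1 / ((harmonic n : ℝ) - Real.eulerMascheroniConstant + s)^(j + 1) := by
    push_cast
    have : 0 < (harmonic n : ℝ) - Real.eulerMascheroniConstant + s := by linarith
    apply one_div_le_one_div_of_le (by positivity)
    exact pow_le_pow_left₀ this.le (by linarith) _
  linarith

lemma thJ_mono {N n m : ℕ} (hN : 0 < N) (hn : N ≤ n) (hm : n ≤ m) {s : ℝ} (hs : -log N < s)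
    (j : ℕ) : thJ N n j s ≤ thJ N m j s := by
  induction m, hm using Nat.le_induction with
  | base => exact le_rfl
  | succ m hm ih => exact ih.trans (thJ_lt_succ hN (hn.trans hm) hs j).le

lemma thJ_anti {N n m : ℕ} (hN : 0 < N) (hn : N ≤ n) (hm : n ≤ m) {s : ℝ} (hs : -log N < s)
    (j : ℕ) : thJ N m j s + 1 / (s + log (m:ℝ))^(j+1) ≤
      thJ N n j s + 1 / (s + log (n:ℝ))^(j+1) := by
  induction m, hm using Nat.le_induction with
  | base => exact le_rfl
  | succ m hm ih => exact (thJ_succ_le hN (hn.trans hm) hs j).trans ih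

lemma thJ_le {N n m : ℕ} (hN : 0 < N) (hn : N ≤ n) (hm : n ≤ m) {s : ℝ} (hs : -log N < s)
    (j : ℕ) : thJ N m j s ≤ thJ N n j s + 1 / (s + log (n:ℝ))^(j+1) := by
  have h := thJ_anti hN hn hm hs j
  have : 0 < s + log (m:ℝ) := pos_of hN hs (by exact_mod_cast hn.trans hm)
  have : 0 < 1 / (s + log (m:ℝ))^(j+1) := by positivity
  linarith

/-- the limit -/
noncomputable def limJ (N j : ℕ) (s : ℝ) : ℝ := ⨆ m : ℕ, thJ N (N + m) j s

lemma tendsto_thJ {N : ℕ} (hN : 0 < N) {s : ℝ} (hs : -log N < s) (j : ℕ) :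
    Tendsto (fun n => thJ N n j s) atTop (𝓝 (limJ N j s)) := by
  have h : Tendsto (fun m => thJ N (N + m) j s) atTop (𝓝 (limJ N j s)) := by
    apply tendsto_atTop_ciSup
    · intro a b hab
      exact thJ_mono hN (by omega) (by omega) hs j
    · refine ⟨thJ N N j s + 1 / (s + log (N:ℝ))^(j+1), ?_⟩
      rintro _ ⟨m, rfl⟩
      exact thJ_le hN le_rfl (by omega) hs j
  have h' : Tendsto (fun m => thJ N (m + N) j s) atTop (𝓝 (limJ N j s)) := by
    simpa only [add_comm] using h
  exact (tendsto_add_atTop_iff_nat (f := fun n => thJ N n j s) N).1 h'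

lemma thJ_le_lim {N n : ℕ} (hN : 0 < N) (hn : N ≤ n) {s : ℝ} (hs : -log N < s) (j : ℕ) :
    thJ N n j s ≤ limJ N j s :=
  ge_of_tendsto (tendsto_thJ hN hs j) (by
    filter_upwards [eventually_ge_atTop n] with m hm using thJ_mono hN hn hm hs j)

lemma lim_le_thJ {N n : ℕ} (hN : 0 < N) (hn : N ≤ n) {s : ℝ} (hs : -log N < s) (j : ℕ) :
    limJ N j s ≤ thJ N n j s + 1 / (s + log (n:ℝ))^(j+1) :=
  le_of_tendsto (tendsto_thJ hN hs j) (by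
    filter_upwards [eventually_ge_atTop n] with m hm using thJ_le hN hn hm hs j)

lemma limJ_pos {N : ℕ} (hN : 0 < N) {s : ℝ} (hs : -log N < s) (j : ℕ) : 0 < limJ N j s := by
  have h0 : thJ N N j s = 0 := by simp [thJ]
  have h1 := thJ_lt_succ hN le_rfl hs j
  have h2 := thJ_le_lim hN (Nat.le_succ N) hs j
  simp only [Nat.succ_eq_add_one] at h2
  linarith

lemma thJ_unif {N : ℕ} (hN : 0 < N) (j : ℕ) :
    TendstoLocallyUniformlyOn (fun n => thJ N n j) (limJ N j) atTop (Set.Ioi (-log N)) := by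
  rw [Metric.tendstoLocallyUniformlyOn_iff]
  intro ε hε x hx
  obtain ⟨a, ha, hax⟩ := exists_between (Set.mem_Ioi.1 hx)
  refine ⟨Set.Ioi a, mem_nhdsWithin_of_mem_nhds (Ioi_mem_nhds hax), ?_⟩
  have hlim : Tendsto (fun n : ℕ => 1 / (a + log (n:ℝ))^(j+1)) atTop (𝓝 0) := by
    have h1 : Tendsto (fun n : ℕ => a + log (n:ℝ)) atTop atTop :=
      tendsto_atTop_add_const_left _ _ (tendsto_log_atTop.comp tendsto_natCast_atTop_atTop)
    have h2 := (tendsto_pow_atTop (α := ℝ) (n := j+1) (by omega)).comp h1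
    simp only [one_div]
    exact h2.inv_tendsto_atTop
  filter_upwards [eventually_ge_atTop N, hlim.eventually (gt_mem_nhds hε)] with n hn hn2 y hy
  have hy' : -log N < y := ha.trans hy
  have h1 := thJ_le_lim hN hn hy' j
  have h2 := lim_le_thJ hN hn hy' j
  have h3 : 0 < a + log (n:ℝ) := pos_of hN ha (by exact_mod_cast hn)
  have h4 : 1 / (y + log (n:ℝ))^(j+1) ≤ 1 / (a + log (n:ℝ))^(j+1) := by
    have : a < y := hy
    gcongr
  rw [Real.dist_eq, abs_of_nonneg (by linarith)]
  linarith

lemma hasDeriv_inv_pow {u s : ℝ} (h : 0 < s + u) (j : ℕ) :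
    HasDerivAt (fun s => 1 / (s + u)^(j+1)) (-((j+1 : ℝ)) * (1 / (s + u)^(j+1+1))) s := by
  have h1 : HasDerivAt (fun s => (s + u)^(j+1)) _ s := ((hasDerivAt_id s).add_const u).pow (j+1)
  have h2 := h1.inv (pow_pos h _).ne'
  simp only [one_div]
  refine HasDerivAt.congr_deriv h2 ?_
  simp only [id, Nat.add_sub_cancel, mul_one]
  push_cast
  field_simp
  ring

lemma hasDeriv_int {N n : ℕ} (hN : 0 < N) (hn : N ≤ n) {s : ℝ} (hs : -log N < s) (j : ℕ) :
    HasDerivAt (fun s => ∫ x in (N:ℝ)..(n:ℝ), 1 / (s + log x)^(j+1))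
      (∫ x in (N:ℝ)..(n:ℝ), -((j+1 : ℝ)) * (1 / (s + log x)^(j+1+1))) s := by
  have hN' : (0:ℝ) < N := by exact_mod_cast hN
  have hn' : (N:ℝ) ≤ n := by exact_mod_cast hn
  obtain ⟨a, ha, has⟩ := exists_between hs
  have hmem : Set.Ioi a ∈ 𝓝 s := Ioi_mem_nhds has
  have hint : ∀ y : ℝ, -log N < y → ∀ p : ℕ,
      IntervalIntegrable (fun x => 1 / (y + log x)^p) volume (N:ℝ) (n:ℝ) := fun y hy p =>
    (cont_f hN' hn' (pos_of hN hy le_rfl) p).intervalIntegrable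
  refine (intervalIntegral.hasDerivAt_integral_of_dominated_loc_of_deriv_le (μ := volume)
    (F := fun s x => 1 / (s + log x)^(j+1))
    (F' := fun s x => -((j+1 : ℝ)) * (1 / (s + log x)^(j+1+1)))
    (bound := fun _ => (j+1 : ℝ) * (1 / (a + log N)^(j+1+1))) hmem ?_ (hint s hs _) ?_ ?_ 
    (by simp) ?_).2
  · filter_upwards [hmem] with y hy
    exact (hint y (ha.trans hy) _).aestronglyMeasurable_restrict_uIoc
  · exact ((hint s hs _).const_mul _).aestronglyMeasurable_restrict_uIoc
  · filter_upwards with x hx y hy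
    rw [Set.uIoc_of_le hn'] at hx
    have h1 := pos_of hN ha (le_refl (N:ℝ))
    have h2 := log_le_log hN' hx.1.le
    have h3 : a < y := hy
    have h4 : 0 < y + log x := by linarith
    rw [norm_mul, norm_neg, Real.norm_of_nonneg (by positivity), Real.norm_of_nonneg (by positivity)]
    gcongr
  · filter_upwards with x hx y hy
    rw [Set.uIoc_of_le hn'] at hx
    exact hasDeriv_inv_pow (pos_of hN (ha.trans hy) hx.1.le) j

lemma hasDeriv_thJ {N n : ℕ} (hN : 0 < N) (hn : N ≤ n) {s : ℝ} (hs : -log N < s) (j : ℕ) :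
    HasDerivAt (thJ N n j) (-((j+1 : ℝ)) * thJ N n (j+1) s) s := by
  have h1 := hasDeriv_int hN hn hs j
  have h2 : HasDerivAt (fun s => ∑ k ∈ Finset.Ico N n,
      1 / ((harmonic k : ℝ) - Real.eulerMascheroniConstant + s)^(j + 1))
      (∑ k ∈ Finset.Ico N n, -((j+1 : ℝ)) *
        (1 / ((harmonic k : ℝ) - Real.eulerMascheroniConstant + s)^(j + 1 + 1))) s := by
    apply HasDerivAt.fun_sum
    intro k hk
    have hk' : (N:ℝ) ≤ k := by exact_mod_cast (Finset.mem_Ico.1 hk).1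
    have h3 := log_half_lt k
    have h4 : 0 < s + log ((k:ℝ) + 1/2) := pos_of hN hs (by linarith)
    have := hasDeriv_inv_pow (u := (harmonic k : ℝ) - Real.eulerMascheroniConstant) (s := s)
      (by linarith) j
    simpa only [add_comm s, add_comm _ ((harmonic k : ℝ) - Real.eulerMascheroniConstant)] using this
  have h3 := h1.sub h2
  rw [intervalIntegral.integral_const_mul, ← Finset.mul_sum, ← mul_sub] at h3
  exact h3

lemma iter_of {G : ℕ → ℝ → ℝ} {S : Set ℝ} (hS : IsOpen S)
    (h : ∀ j, ∀ s ∈ S, HasDerivAt (G j) (G (j+1) s) s) (j : ℕ) :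
    ∀ s ∈ S, iteratedDerivWithin j (G 0) S s = G j s := by
  induction j with
  | zero => intro s _; simp
  | succ j ih =>
    intro s hs
    rw [iteratedDerivWithin_succ, derivWithin_congr ih (ih s hs)]
    exact (h j s hs).hasDerivWithinAt.derivWithin (hS.uniqueDiffWithinAt hs)

/-- scaling constants -/
noncomputable def cJ (j : ℕ) : ℝ := (-1)^j * (Nat.factorial j : ℝ)

lemma cJ_succ (j : ℕ) : cJ (j+1) = cJ j * (-((j+1 : ℝ))) := by
  simp only [cJ, Nat.factorial_succ, pow_succ]; push_cast; ring

lemma cJ_sign (j : ℕ) : (-1:ℝ)^j * cJ j = (Nat.factorial j : ℝ) := by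
  rw [cJ, ← mul_assoc, ← mul_pow]; simp

lemma hasDeriv_G {N n : ℕ} (hN : 0 < N) (hn : N ≤ n) (j : ℕ) :
    ∀ s ∈ Set.Ioi (-log (N:ℝ)), HasDerivAt (fun s => cJ j * thJ N n j s)
      (cJ (j+1) * thJ N n (j+1) s) s := by
  intro s hs
  have := (hasDeriv_thJ hN hn hs j).const_mul (cJ j)
  rwa [← mul_assoc, ← cJ_succ] at this

lemma hasDeriv_L {N : ℕ} (hN : 0 < N) (j : ℕ) :
    ∀ s ∈ Set.Ioi (-log (N:ℝ)), HasDerivAt (fun s => cJ j * limJ N j s)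
      (cJ (j+1) * limJ N (j+1) s) s := by
  intro s hs
  have hu : TendstoLocallyUniformlyOn (fun n s => cJ (j+1) * thJ N n (j+1) s)
      (fun s => cJ (j+1) * limJ N (j+1) s) atTop (Set.Ioi (-log (N:ℝ))) :=
    (uniformContinuous_const_smul (M := ℝ) (cJ (j+1))).comp_tendstoLocallyUniformlyOn
      (thJ_unif hN (j+1))
  refine hasDerivAt_of_tendstoLocallyUniformlyOn (f := fun n s => cJ j * thJ N n j s) isOpen_Ioi hu ?_ ?_ hs
  · filter_upwards [eventually_ge_atTop N] with n hn using hasDeriv_G hN hn j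
  · intro x hx
    exact (tendsto_thJ hN hx j).const_mul _

theorem stmt_15 (N : ℕ) (hN : 0 < N) (t : ℝ) (ht : -Real.log N < t) :
    (∀ j : ℕ, ∃ L : ℝ, 0 < L ∧
      Filter.Tendsto
        (fun n : ℕ =>
          (-1 : ℝ)^j * iteratedDerivWithin j (thetaFun N n) (Set.Ioi (-Real.log N)) t)
        Filter.atTop (𝓝 L) ∧
      Filter.Tendsto
        (fun n : ℕ =>
          (Nat.factorial j : ℝ) *
            ((∫ x in (N : ℝ)..(n : ℝ), 1 / (t + Real.log x)^(j + 1)) -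
              ∑ k ∈ Finset.Ico N n,
                1 / ((harmonic k : ℝ) - Real.eulerMascheroniConstant + t)^(j + 1)))
        Filter.atTop (𝓝 L)) ∧
    ContinuousOn (thetaLim N) (Set.Ioi (-Real.log N)) ∧
    ContDiffOn ℝ (⊤ : ℕ∞) (thetaLim N) (Set.Ioi (-Real.log N)) ∧
    ∀ j : ℕ, ∀ s ∈ Set.Ioi (-Real.log (N : ℝ)),
      0 < (-1 : ℝ)^j * iteratedDerivWithin j (thetaLim N) (Set.Ioi (-Real.log N)) s := by
  have hth : ∀ n, thetaFun N n = fun s => cJ 0 * thJ N n 0 s := by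
    intro n; funext s; simp [thetaFun, thJ, cJ]
  have hL : Set.EqOn (thetaLim N) (fun s => cJ 0 * limJ N 0 s) (Set.Ioi (-Real.log N)) := by
    intro s hs
    have := (tendsto_thJ hN hs 0).const_mul (cJ 0)
    simp only [thetaLim, hth]
    exact this.limUnder_eq
  have hit := fun j => iter_of (G := fun j s => cJ j * limJ N j s) isOpen_Ioi (hasDeriv_L hN) j
  have hcd : ContDiffOn ℝ (⊤ : ℕ∞) (thetaLim N) (Set.Ioi (-Real.log N)) := by
    refine ContDiffOn.congr ?_ hL
    apply contDiffOn_of_differentiableOn_deriv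
    intro m _
    refine DifferentiableOn.congr ?_ (hit m)
    intro s hs
    exact (hasDeriv_L hN m s hs).differentiableAt.differentiableWithinAt
  refine ⟨fun j => ⟨(Nat.factorial j : ℝ) * limJ N j t, ?_, ?_, ?_⟩, hcd.continuousOn, hcd, ?_⟩
  · have := limJ_pos hN ht j
    positivity
  · refine ((tendsto_thJ hN ht j).const_mul (Nat.factorial j : ℝ)).congr' ?_
    filter_upwards [eventually_ge_atTop N] with n hn
    rw [hth, iter_of (G := fun j s => cJ j * thJ N n j s) isOpen_Ioi (hasDeriv_G hN hn) j t ht,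
      ← mul_assoc, cJ_sign]
  · exact (tendsto_thJ hN ht j).const_mul (Nat.factorial j : ℝ)
  · intro j s hs
    rw [iteratedDerivWithin_congr hL hs, hit j s hs, ← mul_assoc, cJ_sign]
    have := limJ_pos hN hs j
    positivity
end
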